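/- arXiv:2109.05806 — 6 statements merged into one kernel-verified Lean document; each statement's English description precedes it below -/
import Mathlib

section
/- Let 0 ≤ k ≤ n−1 and let v ∈ 𝔽ⁿ. If v_{k+1} = 1, then a^{(k+1)}(v) = increase(a^{(k)}(v)); if v_{k+1} = 0, then a^{(k+1)}(v) = a^{(k)}(v). -/
/-!
Adding a bit `1` to a binary counter flips position `j` exactly when all lower bits are `1`,
which is what `a_j + ∏_{h<j} a_h` expresses. So the step with `v_{k+1} = 1` agrees with `increase`
unless the counter is all ones, in which case the step wraps around to `0` while `increase` does
nothing (`bump_eq_increase`). The overflow never happens: the ripple-carry identity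
`sum_bump_add_carry` shows that each step raises the integer encoded by the counter by at most one,
so after `k < n` steps it is at most `k < n ≤ 2 ^ ℓ - 1`, the integer encoded by all ones
(`exists_acount_eq_zero`).
-/

/-- The weight-counter functions `a^{(i)} : 𝔽ⁿ → 𝔽^ℓ`, `ℓ = ⌊log₂ n⌋ + 1`, defined by
`a^{(0)}(v) = 0` and `a^{(i)}_j(v) = a^{(i-1)}_j(v) + (∏_{h<j} a^{(i-1)}_h(v))·v_i`
(indices of `v` are one-based in the paper; here `v_i` is `v ⟨i-1, _⟩`). -/
def acount (n : ℕ) (v : Fin n → ZMod 2) : ℕ → Fin (Nat.log 2 n + 1) → ZMod 2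
  | 0 => fun _ => 0
  | i + 1 => fun j =>
      acount n v i j +
        (∏ h ∈ Finset.Iio j, acount n v i h) * (if h : i < n then v ⟨i, h⟩ else 0)

/-- The `increase` map on `𝔽^l`: adds `1` to the binary representation (least significant
bit first) when the input is not the all-ones vector, and fixes the all-ones vector. -/
def increase {l : ℕ} (a : Fin l → ZMod 2) : Fin l → ZMod 2 :=
  if h : ∃ k, a k = 0 then
    fun j =>
      let z : Fin l := (Finset.univ.filter fun k => a k = 0).min'
        (by obtain ⟨k, hk⟩ := h; exact ⟨k, by simp [hk]⟩)
      if j < z then 0 else if j = z then 1 else a j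
  else a

/-- Addition of `1` modulo `2 ^ l` to a binary vector, least significant bit first: bit `j`
receives the carry `∏_{h<j} a_h`. -/
def bump {l : ℕ} (a : Fin l → ZMod 2) : Fin l → ZMod 2 :=
  fun j => a j + ∏ h ∈ Finset.Iio j, a h

/-- The integer in `[0, 2 ^ l)` encoded by a binary vector, least significant bit first. -/
def binVal {l : ℕ} (a : Fin l → ZMod 2) : ℕ := ∑ j, (a j).val * 2 ^ (j : ℕ)

/-- A half adder: sum bit `a + c` and carry bit `c * a`. -/
theorem half_adder (a c : ZMod 2) : (a + c).val + 2 * (c * a).val = a.val + c.val := by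
  revert a c; decide

theorem eq_one_of_ne_zero_zmod_two {a : ZMod 2} (h : a ≠ 0) : a = 1 := by
  revert a; decide

theorem bump_castSucc {l : ℕ} (a : Fin (l + 1) → ZMod 2) (j : Fin l) :
    bump a j.castSucc = bump (fun i : Fin l => a i.castSucc) j := by
  simp [bump, ← Fin.map_castSuccEmb_Iio]

theorem bump_last {l : ℕ} (a : Fin (l + 1) → ZMod 2) :
    bump a (Fin.last l) = a (Fin.last l) + ∏ i : Fin l, a i.castSucc := by
  simp [bump, Fin.Iio_last_eq_map]

/-- The ripple-carry identity: `bump` adds one, up to the outgoing carry `∏ a_j` of weight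
`2 ^ l`. -/
theorem sum_bump_add_carry {l : ℕ} (a : Fin l → ZMod 2) :
    binVal (bump a) + 2 ^ l * (∏ j, a j).val = binVal a + 1 := by
  induction l with
  | zero => simp [binVal, ZMod.val_one]
  | succ l ih =>
    have h1 := ih (fun i : Fin l => a i.castSucc)
    have h2 := half_adder (a (Fin.last l)) (∏ i : Fin l, a i.castSucc)
    simp only [binVal] at h1 ⊢
    rw [Fin.sum_univ_castSucc, Fin.sum_univ_castSucc, Fin.prod_univ_castSucc, bump_last]
    simp only [bump_castSucc, Fin.val_castSucc, Fin.val_last, pow_succ]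
    linear_combination h1 + 2 ^ l * h2

theorem binVal_ones {l : ℕ} : binVal (fun _ : Fin l => (1 : ZMod 2)) + 1 = 2 ^ l := by
  induction l with
  | zero => simp [binVal]
  | succ l ih =>
    simp only [binVal, ZMod.val_one, one_mul] at ih ⊢
    rw [Fin.sum_univ_castSucc]
    simp only [Fin.val_castSucc, Fin.val_last, pow_succ]
    omega

theorem binVal_acount_le (n : ℕ) (v : Fin n → ZMod 2) (k : ℕ) : binVal (acount n v k) ≤ k := by
  induction k with
  | zero => simp [binVal, acount]
  | succ k ih =>
    have hc : ∀ x : ZMod 2, x = 0 ∨ x = 1 := by decide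
    rcases hc (if h : k < n then v ⟨k, h⟩ else 0) with h | h
    · have : acount n v (k + 1) = acount n v k := by
        funext j
        simp only [acount, h, mul_zero, add_zero]
      rw [this]; omega
    · have : acount n v (k + 1) = bump (acount n v k) := by
        funext j
        simp only [acount, h, mul_one, bump]
      have h1 := sum_bump_add_carry (acount n v k)
      rw [this]; omega

/-- The counter is not yet all ones after `k < n` steps. -/
theorem exists_acount_eq_zero (n : ℕ) (v : Fin n → ZMod 2) (k : ℕ) (hk : k < n) :
    ∃ j, acount n v k j = 0 := by
  by_contra! hne
  have h1 : acount n v k = fun _ => 1 := funext fun j => eq_one_of_ne_zero_zmod_two (hne j)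
  have h2 := binVal_acount_le n v k
  have h3 := binVal_ones (l := Nat.log 2 n + 1)
  have h4 := Nat.lt_pow_succ_log_self (b := 2) (by norm_num) n
  rw [h1] at h2
  rw [Nat.succ_eq_add_one] at h4
  omega

theorem bump_eq_increase {l : ℕ} (a : Fin l → ZMod 2) (ha : ∃ j, a j = 0) :
    bump a = increase a := by
  funext j
  simp only [increase, dif_pos ha]
  generalize_proofs hne
  set z := (Finset.univ.filter fun k => a k = 0).min' hne with hz
  have haz : a z = 0 := (Finset.mem_filter.1 (Finset.min'_mem _ hne)).2
  have hlt : ∀ h < z, a h = 1 := fun h hh =>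
    eq_one_of_ne_zero_zmod_two fun h0 =>
      absurd (Finset.min'_le (Finset.univ.filter fun k => a k = 0) h (by simp [h0]))
        (not_le.2 hh)
  have hprod : ∀ i ≤ z, ∏ h ∈ Finset.Iio i, a h = 1 := fun i hi =>
    Finset.prod_eq_one fun h hh => hlt h ((Finset.mem_Iio.1 hh).trans_le hi)
  rcases lt_trichotomy j z with h | h | h
  · rw [if_pos h, bump, hlt j h, hprod j h.le]
    decide
  · rw [if_neg h.not_lt, if_pos h, bump, hprod j h.le, h, haz, zero_add]
  · rw [if_neg h.not_gt, if_neg h.ne', bump,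
      Finset.prod_eq_zero (Finset.mem_Iio.2 h) haz, add_zero]


/-- (Paper's Lemma on the counter.)  For `0 ≤ k ≤ n - 1`:
if `v_{k+1} = 1` then `a^{(k+1)}(v) = increase(a^{(k)}(v))`, and if `v_{k+1} = 0`
then `a^{(k+1)}(v) = a^{(k)}(v)`. -/
theorem acount_step (n : ℕ) (hn : 1 ≤ n) (v : Fin n → ZMod 2) (k : ℕ) (hk : k ≤ n - 1) :
    (v ⟨k, by omega⟩ = 1 → acount n v (k + 1) = increase (acount n v k)) ∧
    (v ⟨k, by omega⟩ = 0 → acount n v (k + 1) = acount n v k) := by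
  have hkn : k < n := by omega
  constructor
  · intro hv
    rw [← bump_eq_increase _ (exists_acount_eq_zero n v k hkn)]
    funext j
    simp [acount, bump, hkn, hv]
  · intro hv
    funext j
    simp [acount, hkn, hv]
end

section
/- Let v ∈ 𝔽ⁿ and let 1 ≤ i ≤ n. Then the Hamming weight of the truncated-projection π_i(v) equals the integer represented in binary by a^{(i)}(v); that is, w(π_i(v)) = int(a^{(i)}₁(v), …, a^{(i)}_ℓ(v)). -/
/-- The Hamming weight of a vector over `𝔽₂`: the number of nonzero coordinates. -/
def hammingWt {m : ℕ} (v : Fin m → ZMod 2) : ℕ :=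
  (Finset.univ.filter fun j => v j ≠ 0).card

/-- `int(a) = ∑_j a_j · 2^(j-1)` (one-based), i.e. the integer whose binary expansion,
least significant bit first, is `a`. -/
def intval {l : ℕ} (a : Fin l → ZMod 2) : ℕ :=
  ∑ j, (a j).val * 2 ^ (j : ℕ)

/-- The projection `π_i(v) = (v₁,…,v_i,0,…,0)` (one-based coordinates). -/
def proj {n : ℕ} (i : ℕ) (v : Fin n → ZMod 2) : Fin n → ZMod 2 :=
  fun j => if (j : ℕ) < i then v j else 0

/-- The half adder: sum bit plus twice the carry bit. -/
lemma val_add_add_two_mul_val_mul (x p : ZMod 2) :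
    (x + p).val + 2 * (x * p).val = x.val + p.val := by
  revert x p; decide

/-- Adding the bit `c` to a binary counter by rippling the carry; the last summand on the left is
the overflow out of the top position. -/
lemma intval_increment {l : ℕ} (a : Fin l → ZMod 2) (c : ZMod 2) :
    intval (fun j => a j + (∏ h ∈ Finset.Iio j, a h) * c) + 2 ^ l * ((∏ h, a h) * c).val
      = intval a + c.val := by
  induction l with
  | zero => simp [intval]
  | succ l ih =>
    have ih := ih fun j => a j.castSucc
    have hlast : ∏ h ∈ Finset.Iio (Fin.last l), a h = ∏ h : Fin l, a h.castSucc := by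
      rw [Fin.Iio_last_eq_map, Finset.prod_map]; rfl
    have hcast (j : Fin l) :
        ∏ h ∈ Finset.Iio j.castSucc, a h = ∏ h ∈ Finset.Iio j, a h.castSucc := by
      rw [Fin.Iio_castSucc, Finset.prod_map]; rfl
    simp only [intval, Fin.sum_univ_castSucc, Fin.prod_univ_castSucc, hlast, hcast,
      Fin.val_castSucc, Fin.val_last] at ih ⊢
    generalize (∏ h : Fin l, a h.castSucc) = P at ih ⊢
    have hadd := val_add_add_two_mul_val_mul (a (Fin.last l)) (P * c)
    rw [show P * a (Fin.last l) * c = a (Fin.last l) * (P * c) by ring, pow_succ]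
    linear_combination ih + 2 ^ l * hadd

lemma hammingWt_proj_zero {n : ℕ} (v : Fin n → ZMod 2) : hammingWt (proj 0 v) = 0 := by
  simp [hammingWt, proj]

lemma hammingWt_proj_succ {n : ℕ} (v : Fin n → ZMod 2) (i : ℕ) (hi : i < n) :
    hammingWt (proj (i + 1) v) = hammingWt (proj i v) + (v ⟨i, hi⟩).val := by
  have hbit (x : ZMod 2) : x.val = if x ≠ 0 then 1 else 0 := by revert x; decide
  have hsingle : (v ⟨i, hi⟩).val = ∑ j, if j = ⟨i, hi⟩ then (v j).val else 0 := by simp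
  simp only [hammingWt, Finset.card_filter, ← hbit]
  rw [hsingle, ← Finset.sum_add_distrib]
  refine Finset.sum_congr rfl fun j _ => ?_
  simp only [proj, Fin.ext_iff]
  rcases lt_trichotomy (j : ℕ) i with h | h | h
  · simp [h, h.ne, Nat.lt_succ_of_lt h]
  · simp [h]
  · simp [h.ne', h.not_gt, Nat.not_lt.mpr (Nat.succ_le_of_lt h)]

lemma hammingWt_le {n : ℕ} (v : Fin n → ZMod 2) : hammingWt v ≤ n :=
  (Finset.card_filter_le _ _).trans (by simp)

/-- The induction, started at `i = 0`. -/
lemma hammingWt_proj_eq_intval_acount_of_le (n : ℕ) (v : Fin n → ZMod 2) (i : ℕ) (hin : i ≤ n) :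
    hammingWt (proj i v) = intval (acount n v i) := by
  induction i with
  | zero => rw [hammingWt_proj_zero]; simp [intval, acount]
  | succ i ih =>
    have hi : i < n := hin
    have hinc := intval_increment (acount n v i) (v ⟨i, hi⟩)
    rw [← ih hi.le, ← hammingWt_proj_succ v i hi] at hinc
    have hlt : hammingWt (proj (i + 1) v) < 2 ^ (Nat.log 2 n + 1) :=
      (hammingWt_le _).trans_lt (Nat.lt_pow_succ_log_self one_lt_two n)
    -- A nonzero overflow would push the left-hand side of `hinc` up to at least `2 ^ ℓ > n`.
    have hover : ((∏ h, acount n v i h) * v ⟨i, hi⟩).val = 0 := by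
      by_contra hne
      have := Nat.le_mul_of_pos_right (2 ^ (Nat.log 2 n + 1)) (Nat.pos_of_ne_zero hne)
      omega
    rw [hover, mul_zero, add_zero] at hinc
    simp only [acount, dif_pos hi]
    exact hinc.symm

/-- (Paper's Theorem.)  For `v ∈ 𝔽ⁿ` and `1 ≤ i ≤ n`, the Hamming
weight of `π_i(v)` equals the integer represented in binary by `a^{(i)}(v)`. -/
theorem hammingWt_proj_eq_intval_acount (n : ℕ) (hn : 1 ≤ n) (v : Fin n → ZMod 2)
    (i : ℕ) (hi1 : 1 ≤ i) (hin : i ≤ n) :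
    hammingWt (proj i v) = intval (acount n v i) := by
  exact hammingWt_proj_eq_intval_acount_of_le n v i hin
end

section
/- Define F(u,v) = ∑_{j=1}^{l} f_j(u,v)·(v_j + 1) ∈ 𝔽. Then for all u, v ∈ 𝔽^l: F(u,v) = 0 if and only if int(u) ≤ int(v). -/
/-!
Two binary integers are compared at their most significant bit, and only if these bits agree are
the remaining bits compared. The polynomial obeys the same recursion (`Fcomp_succ`): if `u', v'`
drop the most significant bits `a, b` of `u, v`, then
`F(u,v) = F(u',v') * (a + b + 1) + (a + b) * (b + 1)`, which is `F(u',v')` when `a = b` and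
`b + 1` when `a ≠ b`. On the integer side, `intval_lt` says that the top bit outweighs all the
others together. The theorem follows by induction on `l`, starting from the trivial case `l = 0`.
-/

/-- `g_h(u,v) = u_h + v_h`. -/
def gcomp {l : ℕ} (u v : Fin l → ZMod 2) (h : Fin l) : ZMod 2 := u h + v h

/-- `f_j(u,v) = g_j(u,v) · ∏_{h=j+1}^{l} (g_h(u,v) + 1)` (the empty product is `1`). -/
def fcomp {l : ℕ} (u v : Fin l → ZMod 2) (j : Fin l) : ZMod 2 :=
  gcomp u v j * ∏ h ∈ Finset.Ioi j, (gcomp u v h + 1)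

/-- The comparison polynomial `F(u,v) = ∑_{j=1}^{l} f_j(u,v)·(v_j + 1)`. -/
def Fcomp {l : ℕ} (u v : Fin l → ZMod 2) : ZMod 2 :=
  ∑ j, fcomp u v j * (v j + 1)

theorem intval_succ {l : ℕ} (a : Fin (l + 1) → ZMod 2) :
    intval a = intval (fun j : Fin l => a j.castSucc) + (a (Fin.last l)).val * 2 ^ l := by
  simp [intval, Fin.sum_univ_castSucc]

theorem intval_lt {l : ℕ} (a : Fin l → ZMod 2) : intval a < 2 ^ l := by
  induction l with
  | zero => simp [intval]
  | succ l ih =>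
    have h1 := ih (fun j => a j.castSucc)
    have h2 : (a (Fin.last l)).val ≤ 1 := Nat.le_of_lt_succ (ZMod.val_lt _)
    rw [intval_succ, pow_succ]
    nlinarith

theorem fcomp_castSucc {l : ℕ} (u v : Fin (l + 1) → ZMod 2) (j : Fin l) :
    fcomp u v j.castSucc =
      fcomp (fun i : Fin l => u i.castSucc) (fun i : Fin l => v i.castSucc) j *
        (u (Fin.last l) + v (Fin.last l) + 1) := by
  have hI : ∀ {n : ℕ} (i : Fin n), Finset.Ioi i = Finset.univ.filter (fun h => i < h) := by
    intro n i
    ext h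
    simp
  simp only [fcomp, gcomp, hI, Finset.prod_filter, Fin.prod_univ_castSucc,
    Fin.castSucc_lt_castSucc_iff, Fin.castSucc_lt_last, if_true, mul_assoc]

theorem fcomp_last {l : ℕ} (u v : Fin (l + 1) → ZMod 2) :
    fcomp u v (Fin.last l) = u (Fin.last l) + v (Fin.last l) := by
  have hI : Finset.Ioi (Fin.last l) = ∅ := by
    ext h
    simp [Fin.le_last]
  simp [fcomp, gcomp, hI]

/-- Recursion of the comparison polynomial on the most significant bit. -/
theorem Fcomp_succ {l : ℕ} (u v : Fin (l + 1) → ZMod 2) :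
    Fcomp u v =
      Fcomp (fun i : Fin l => u i.castSucc) (fun i : Fin l => v i.castSucc) *
          (u (Fin.last l) + v (Fin.last l) + 1) +
        (u (Fin.last l) + v (Fin.last l)) * (v (Fin.last l) + 1) := by
  simp only [Fcomp, Fin.sum_univ_castSucc, fcomp_castSucc, fcomp_last, Finset.sum_mul]
  congr 1
  exact Finset.sum_congr rfl fun j _ => by ring

/-- The comparison criterion for every length, including the empty one. -/
theorem Fcomp_eq_zero_iff_le_aux (l : ℕ) (u v : Fin l → ZMod 2) :
    Fcomp u v = 0 ↔ intval u ≤ intval v := by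
  induction l with
  | zero => simp [Fcomp, intval]
  | succ l ih =>
    have ih := ih (fun i => u i.castSucc) (fun i => v i.castSucc)
    have hu := intval_lt (fun i : Fin l => u i.castSucc)
    have hv := intval_lt (fun i : Fin l => v i.castSucc)
    rw [Fcomp_succ, intval_succ, intval_succ]
    generalize Fcomp (fun i : Fin l => u i.castSucc) (fun i : Fin l => v i.castSucc) = F at *
    generalize intval (fun i : Fin l => u i.castSucc) = m at *
    generalize intval (fun i : Fin l => v i.castSucc) = n at *
    generalize u (Fin.last l) = a
    generalize v (Fin.last l) = b
    have h01 : ∀ x : ZMod 2, x = 0 ∨ x = 1 := by decide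
    have h11 : (1 : ZMod 2) + 1 = 0 := by decide
    have hval : (1 : ZMod 2).val = 1 := rfl
    rcases h01 a with rfl | rfl <;> rcases h01 b with rfl | rfl <;>
      simp [h11, hval, ih] <;> omega

/-- (Paper's Proposition.)  For all `u, v ∈ 𝔽^l`, `F(u,v) = 0` if and
only if `int(u) ≤ int(v)`. -/
theorem Fcomp_eq_zero_iff_le (l : ℕ) (hl : 1 ≤ l) (u v : Fin l → ZMod 2) :
    Fcomp u v = 0 ↔ intval u ≤ intval v := by
  exact Fcomp_eq_zero_iff_le_aux l u v
end

section
/- Let Ĥ be any parity-check matrix for the code Ĉ (i.e. a binary matrix whose null space is exactly Ĉ), let ŝ = Ĥ·ε̂ᵀ, and let Ŵ = {v ∈ 𝔽¹⁰ : Ĥ·vᵀ = ŝ and w(v) ≤ 3} be the set of witnesses of the MLD instance (Ĥ, ŝ, 3). Then the image of Ŵ under the truncation τ₃ equals V = {(0,0,0), (1,0,0), (0,1,0), (1,1,1)}, the set of zeroes of xy + z over 𝔽. -/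
/-!
Since `Ĥ` has null space `Ĉ`, the solutions of `Ĥ·v = Ĥ·ε̂` form the coset `ε̂ + Ĉ`, whose elements
are `ε̂ + a g₁ + b g₂ + c g₃` (`mulVec_eq_iff_exists`). The first three columns of `Ĝ` are the
identity and `ε̂` vanishes there, so such an element truncates to `(a, b, c)` (`tau3_cosetVec`).
Going through the eight choices of `(a, b, c)`, its weight is at most `3` exactly when
`ab + c = 0` (`hammingWt_cosetVec_le_iff`), and these `(a, b, c)` are the points of `V`.
-/

/-- First row of the generator matrix `Ĝ`. -/
def g1 : Fin 10 → ZMod 2 := ![1,0,0,1,1,0,0,1,1,1]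

/-- Second row of the generator matrix `Ĝ`. -/
def g2 : Fin 10 → ZMod 2 := ![0,1,0,0,0,1,1,1,1,1]

/-- Third row of the generator matrix `Ĝ`. -/
def g3 : Fin 10 → ZMod 2 := ![0,0,1,1,1,1,1,1,1,1]

/-- The `[10,3]` binary linear code `Ĉ` spanned by the three rows of `Ĝ`. -/
def Chat : Set (Fin 10 → ZMod 2) :=
  {x | ∃ a b c : ZMod 2, x = a • g1 + b • g2 + c • g3}

/-- The coset representative `ε̂ = (0,0,0,0,0,0,0,1,1,1)`. -/
def epsHat : Fin 10 → ZMod 2 := ![0,0,0,0,0,0,0,1,1,1]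

/-- The coset `Σ̂ = ε̂ + Ĉ ⊆ 𝔽¹⁰`. -/
def SigmaHat : Set (Fin 10 → ZMod 2) := {x | ∃ c ∈ Chat, x = epsHat + c}

/-- The truncation `τ₃ : 𝔽¹⁰ → 𝔽³` onto the first three coordinates. -/
def tau3 (v : Fin 10 → ZMod 2) : Fin 3 → ZMod 2 :=
  fun j => v (Fin.castLE (by omega) j)

/-- The variety `V = {(0,0,0),(1,0,0),(0,1,0),(1,1,1)} ⊆ 𝔽³` of zeroes of `xy + z`. -/
def Vxyz : Set (Fin 3 → ZMod 2) :=
  {![0,0,0], ![1,0,0], ![0,1,0], ![1,1,1]}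

/-- The element `ε̂ + a g₁ + b g₂ + c g₃` of the coset `ε̂ + Ĉ`. -/
def cosetVec (a b c : ZMod 2) : Fin 10 → ZMod 2 :=
  epsHat + (a • g1 + b • g2 + c • g3)

lemma tau3_cosetVec : ∀ a b c : ZMod 2, tau3 (cosetVec a b c) = ![a, b, c] := by
  decide

/-- The weights over the coset are `3`, `5`, `7`, `9`; weight `3` occurs exactly on the zeroes
of `xy + z`. -/
lemma hammingWt_cosetVec_le_iff :
    ∀ a b c : ZMod 2, hammingWt (cosetVec a b c) ≤ 3 ↔ a * b + c = 0 := by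
  decide

lemma mem_Vxyz_iff (a b c : ZMod 2) : ![a, b, c] ∈ Vxyz ↔ a * b + c = 0 := by
  simp only [Vxyz, Set.mem_insert_iff, Set.mem_singleton_iff]
  revert a b c
  decide

lemma mulVec_eq_iff_exists {m : ℕ} {H : Matrix (Fin m) (Fin 10) (ZMod 2)}
    (hH : ∀ v : Fin 10 → ZMod 2, H.mulVec v = 0 ↔ v ∈ Chat) (v : Fin 10 → ZMod 2) :
    H.mulVec v = H.mulVec epsHat ↔ ∃ a b c, v = cosetVec a b c := by
  rw [← sub_eq_zero, ← Matrix.mulVec_sub, hH]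
  simp only [Chat, Set.mem_ofPred_eq, cosetVec, sub_eq_iff_eq_add']

/-- (Paper's Proposition.)  Let `Ĥ` be any parity-check matrix for `Ĉ`
(i.e. a binary matrix whose null space is exactly `Ĉ`), let `ŝ = Ĥ·ε̂ᵀ`, and let `Ŵ` be
the set of witnesses of the MLD instance `(Ĥ, ŝ, 3)`, i.e. vectors `v ∈ 𝔽¹⁰` with
`Ĥ·vᵀ = ŝ` and `w(v) ≤ 3`.  Then `τ₃(Ŵ) = V = {(0,0,0),(1,0,0),(0,1,0),(1,1,1)}`,
the set of zeroes of `xy + z` over `𝔽`. -/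
theorem witnesses_truncate_to_variety (m : ℕ) (H : Matrix (Fin m) (Fin 10) (ZMod 2))
    (hH : ∀ v : Fin 10 → ZMod 2, H.mulVec v = 0 ↔ v ∈ Chat) :
    tau3 '' {v : Fin 10 → ZMod 2 | H.mulVec v = H.mulVec epsHat ∧ hammingWt v ≤ 3}
      = Vxyz := by
  ext x
  constructor
  · rintro ⟨v, ⟨hv, hw⟩, rfl⟩
    obtain ⟨a, b, c, rfl⟩ := (mulVec_eq_iff_exists hH v).1 hv
    rw [tau3_cosetVec, mem_Vxyz_iff]
    exact (hammingWt_cosetVec_le_iff a b c).1 hw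
  · intro hx
    have hx3 : x = ![x 0, x 1, x 2] := by
      ext i
      fin_cases i <;> rfl
    rw [hx3, mem_Vxyz_iff] at hx
    refine ⟨cosetVec (x 0) (x 1) (x 2), ⟨?_, ?_⟩, ?_⟩
    · exact (mulVec_eq_iff_exists hH _).2 ⟨_, _, _, rfl⟩
    · exact (hammingWt_cosetVec_le_iff _ _ _).2 hx
    · rw [tau3_cosetVec, ← hx3]
end

section
/- Fix q ≥ 1 and let ṽ ∈ 𝔽^{10q} be a vector whose q consecutive blocks v⁽¹⁾, …, v⁽q⁾ ∈ 𝔽¹⁰ all lie in the coset Σ̂ = ε̂ + Ĉ. Then w(ṽ) ≤ 3q if and only if w(v⁽ⁱ⁾) ≤ 3 for every i = 1,…,q. Equivalently, writing Ŵ = {v ∈ Σ̂ : w(v) ≤ 3} and W̃ = {ṽ ∈ Σ̂ × ⋯ × Σ̂ (q factors) : w(ṽ) ≤ 3q}, one has W̃ = Ŵ × Ŵ × ⋯ × Ŵ (q factors). -/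
/-- The `i`-th length-10 block of a vector in `𝔽^{10q}` (blocks are consecutive). -/
def block (q : ℕ) (v : Fin (10 * q) → ZMod 2) (i : Fin q) : Fin 10 → ZMod 2 :=
  fun s => v ⟨10 * (i : ℕ) + (s : ℕ), by have := i.isLt; have := s.isLt; omega⟩

/-- The coset `Σ̂` has minimum weight at least `3`, by enumerating its eight elements. -/
lemma three_le_hammingWt {x : Fin 10 → ZMod 2} (hx : x ∈ SigmaHat) : 3 ≤ hammingWt x := by
  obtain ⟨_, ⟨a, b, c, rfl⟩, rfl⟩ := hx
  revert a b c
  decide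

lemma hammingWt_eq_sum_block (q : ℕ) (v : Fin (10 * q) → ZMod 2) :
    hammingWt v = ∑ i, hammingWt (block q v i) := by
  simp only [hammingWt, Finset.card_filter]
  rw [← Fintype.sum_prod_type']
  symm
  -- `finProdFinEquiv` sends `(i, s)` to `s + 10 * i`, the position of entry `s` of block `i`.
  refine Fintype.sum_equiv (finProdFinEquiv.trans (finCongr (Nat.mul_comm q 10))) _ _ ?_
  rintro ⟨i, s⟩
  have h : (⟨10 * (i : ℕ) + (s : ℕ), by omega⟩ : Fin (10 * q)) =
      finProdFinEquiv.trans (finCongr (Nat.mul_comm q 10)) (i, s) := by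
    ext
    simp [Nat.add_comm]
  simp only [block, h]

/-- (Paper's Lemma.)  Let `ṽ ∈ 𝔽^{10q}` be a vector whose `q`
consecutive blocks all lie in the coset `Σ̂ = ε̂ + Ĉ`.  Then `w(ṽ) ≤ 3q` if and only if
every block of `ṽ` has weight at most `3` (i.e. `W̃ = Ŵ × ⋯ × Ŵ`). -/
theorem product_coset_weight (q : ℕ) (hq : 1 ≤ q) (v : Fin (10 * q) → ZMod 2)
    (hb : ∀ i, block q v i ∈ SigmaHat) :
    hammingWt v ≤ 3 * q ↔ ∀ i, hammingWt (block q v i) ≤ 3 := by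
  have hmin : ∀ i ∈ Finset.univ, 3 ≤ hammingWt (block q v i) :=
    fun i _ => three_le_hammingWt (hb i)
  have hconst : ∑ _i : Fin q, 3 = 3 * q := by simp [Nat.mul_comm]
  rw [hammingWt_eq_sum_block, ← hconst]
  constructor
  · intro h i
    -- The sum attains its termwise lower bound, so every term does.
    have heq := le_antisymm (Finset.sum_le_sum hmin) h
    exact ((Finset.sum_eq_sum_iff_of_le hmin).1 heq i (Finset.mem_univ i)).ge
  · exact fun h => Finset.sum_le_sum fun i _ => h i
end

section
/- Fix q ≥ 1 and λ ≥ 0. Let S be a standard-form system in variables x₁,…,x_{3q} over 𝔽, consisting of the q pairwise variable-disjoint quadratic equations x_{3(i-1)+1}·x_{3(i-1)+2} + x_{3(i-1)+3} = 0 (i = 1,…,q) together with λ linear equations f₁ = 0, …, f_λ = 0, where f_k = ∑_{j=1}^{3q} a⁽ᵏ⁾_j x_j + δ_k. Let W = {ṽ ∈ 𝔽^{10q} : each of the q length-10 blocks of ṽ lies in Σ̂ = ε̂ + Ĉ, w(ṽ) ≤ 3q, and ∑_{j=1}^{3q} a⁽ᵏ⁾_j·τ(ṽ)_j = δ_k for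 every k = 1,…,λ}. Then the image τ(W) equals the set of common zeroes of S in 𝔽^{3q}; in particular, if ṽ ∈ W then τ(ṽ) is a solution of S, and every solution of S is of this form. -/
/-- The `10q × 3q` block-diagonal matrix `M_τ` with `q` diagonal blocks, each being the
`3 × 3` identity on top of the `7 × 3` zero matrix; it represents the blockwise
truncation via `τ(v) = v · M_τ`. -/
def Mtau (q : ℕ) : Matrix (Fin (10 * q)) (Fin (3 * q)) (ZMod 2) :=
  fun r c =>
    if (r : ℕ) % 10 < 3 ∧ (r : ℕ) / 10 = (c : ℕ) / 3 ∧ (r : ℕ) % 10 = (c : ℕ) % 3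
    then 1 else 0

/-- The element `ε̂ + a g₁ + b g₂ + c g₃` of the coset `Σ̂`. -/
def cosetWord (a b c : ZMod 2) : Fin 10 → ZMod 2 :=
  epsHat + (a • g1 + b • g2 + c • g3)

lemma three_le_hammingWt_cosetWord :
    ∀ a b c : ZMod 2, 3 ≤ hammingWt (cosetWord a b c) := by
  decide

lemma hammingWt_cosetWord_eq_three_iff :
    ∀ a b c : ZMod 2, hammingWt (cosetWord a b c) = 3 ↔ a * b + c = 0 := by
  decide

lemma cosetWord_zero : ∀ a b c : ZMod 2, cosetWord a b c 0 = a := by decide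

lemma cosetWord_one : ∀ a b c : ZMod 2, cosetWord a b c 1 = b := by decide

lemma cosetWord_two : ∀ a b c : ZMod 2, cosetWord a b c 2 = c := by decide

lemma cosetWord_mem (a b c : ZMod 2) : cosetWord a b c ∈ SigmaHat :=
  ⟨_, ⟨a, b, c, rfl⟩, rfl⟩

/-- An element of `Σ̂` is determined by its first three coordinates. -/
lemma eq_cosetWord_of_mem {x : Fin 10 → ZMod 2} (hx : x ∈ SigmaHat) :
    x = cosetWord (x 0) (x 1) (x 2) := by
  obtain ⟨_, ⟨a, b, c, rfl⟩, rfl⟩ := hx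
  change cosetWord a b c =
    cosetWord (cosetWord a b c 0) (cosetWord a b c 1) (cosetWord a b c 2)
  rw [cosetWord_zero, cosetWord_one, cosetWord_two]

/-- `v · M_τ` is the blockwise truncation of `v`. -/
lemma vecMul_Mtau (q : ℕ) (v : Fin (10 * q) → ZMod 2) (c : Fin (3 * q)) :
    Matrix.vecMul v (Mtau q) c =
      v ⟨10 * ((c : ℕ) / 3) + (c : ℕ) % 3, by have := c.isLt; omega⟩ := by
  simp only [Matrix.vecMul, dotProduct, Mtau]
  rw [Finset.sum_eq_single
    (⟨10 * ((c : ℕ) / 3) + (c : ℕ) % 3, by have := c.isLt; omega⟩ : Fin (10 * q))]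
  · rw [if_pos (by dsimp only; omega), mul_one]
  · intro r _ hr
    rw [if_neg, mul_zero]
    rintro ⟨_, h2, h3⟩
    exact hr (Fin.ext (by dsimp only; omega))
  · simp

/-- The position in `𝔽^{3q}` of the `j`-th variable of the `i`-th triple. -/
def tripleIdx {q : ℕ} (i : Fin q) (j : Fin 3) : Fin (3 * q) :=
  ⟨3 * (i : ℕ) + (j : ℕ), by have := i.isLt; have := j.isLt; omega⟩

lemma vecMul_Mtau_block (q : ℕ) (v : Fin (10 * q) → ZMod 2) (i : Fin q) (j : Fin 3) :
    Matrix.vecMul v (Mtau q) (tripleIdx i j) = tau3 (block q v i) j := by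
  rw [vecMul_Mtau]
  refine congrArg v (Fin.ext ?_)
  have := j.isLt
  simp only [tripleIdx, Fin.val_castLE]
  omega

/-- If all blocks of `v` lie in `Σ̂`, then `w(v) ≤ 3q` says exactly that the first three coordinates
of each block satisfy the quadratic equation. -/
lemma hammingWt_le_iff (q : ℕ) (v : Fin (10 * q) → ZMod 2) (hv : ∀ i, block q v i ∈ SigmaHat) :
    hammingWt v ≤ 3 * q ↔
      ∀ i, block q v i 0 * block q v i 1 + block q v i 2 = 0 := by
  have hge : ∀ i ∈ Finset.univ, 3 ≤ hammingWt (block q v i) := fun i _ => by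
    rw [eq_cosetWord_of_mem (hv i)]
    exact three_le_hammingWt_cosetWord _ _ _
  have hsum : ∑ _i : Fin q, 3 = 3 * q := by simp [Nat.mul_comm]
  have hle := Finset.sum_le_sum hge
  have heq := Finset.sum_eq_sum_iff_of_le hge
  rw [hsum, ← hammingWt_eq_sum_block] at hle heq
  rw [hle.ge_iff_eq, heq]
  refine ⟨fun h i => ?_, fun h i _ => ?_⟩
  · rw [← hammingWt_cosetWord_eq_three_iff, ← eq_cosetWord_of_mem (hv i)]
    exact (h i (Finset.mem_univ i)).symm
  · rw [eq_cosetWord_of_mem (hv i)]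
    exact ((hammingWt_cosetWord_eq_three_iff _ _ _).2 (h i)).symm

/-- The lift of `w` to length `10q`: the `i`-th block is the word of `Σ̂` whose first three
coordinates are the `i`-th triple of `w`. -/
def lift (q : ℕ) (w : Fin (3 * q) → ZMod 2) : Fin (10 * q) → ZMod 2 := fun r =>
  let i : Fin q := ⟨(r : ℕ) / 10, by have := r.isLt; omega⟩
  cosetWord (w (tripleIdx i 0)) (w (tripleIdx i 1)) (w (tripleIdx i 2)) ⟨(r : ℕ) % 10, by omega⟩

lemma block_lift (q : ℕ) (w : Fin (3 * q) → ZMod 2) (i : Fin q) :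
    block q (lift q w) i =
      cosetWord (w (tripleIdx i 0)) (w (tripleIdx i 1)) (w (tripleIdx i 2)) := by
  funext s
  have h1 : (10 * (i : ℕ) + (s : ℕ)) / 10 = i := by have := s.isLt; omega
  have h2 : (10 * (i : ℕ) + (s : ℕ)) % 10 = s := by have := s.isLt; omega
  simp only [block, lift, h1, h2]

lemma vecMul_lift (q : ℕ) (w : Fin (3 * q) → ZMod 2) :
    Matrix.vecMul (lift q w) (Mtau q) = w := by
  funext c
  obtain ⟨i, j, rfl⟩ : ∃ (i : Fin q) (j : Fin 3), c = tripleIdx i j :=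
    ⟨⟨c / 3, by have := c.isLt; omega⟩, ⟨c % 3, by omega⟩,
      Fin.ext (by simp only [tripleIdx]; omega)⟩
  rw [vecMul_Mtau_block, block_lift]
  fin_cases j
  · exact cosetWord_zero _ _ _
  · exact cosetWord_one _ _ _
  · exact cosetWord_two _ _ _

/-- (Paper's main correctness theorem for the reduction `β` from MQ to
MLD.)  Fix `q ≥ 1` and `λ ≥ 0`, and let `S` be the standard-form system in variables
`x₁,…,x_{3q}` consisting of the `q` pairwise variable-disjoint quadratic equations
`x_{3(i-1)+1}·x_{3(i-1)+2} + x_{3(i-1)+3} = 0` together with the `λ` linear equations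
`f_k = ∑_j A_{k,j} x_j + δ_k = 0`.  Let `W` be the set of vectors `ṽ ∈ 𝔽^{10q}` whose
`q` consecutive blocks lie in `Σ̂ = ε̂ + Ĉ`, with `w(ṽ) ≤ 3q`, and with
`∑_j A_{k,j}·τ(ṽ)_j = δ_k` for every `k` (where `τ(ṽ) = ṽ · M_τ`).  Then
`τ(W)` is exactly the set of common zeroes of `S` in `𝔽^{3q}`; in particular every
`ṽ ∈ W` truncates to a solution of `S`, and every solution of `S` arises this way. -/
theorem beta_reduction_correct (q : ℕ) (hq : 1 ≤ q) (lam : ℕ)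
    (A : Fin lam → Fin (3 * q) → ZMod 2) (δ : Fin lam → ZMod 2) :
    (fun v => Matrix.vecMul v (Mtau q)) ''
        {v : Fin (10 * q) → ZMod 2 |
          (∀ i, block q v i ∈ SigmaHat) ∧ hammingWt v ≤ 3 * q ∧
          ∀ k, (∑ j, A k j * Matrix.vecMul v (Mtau q) j) = δ k}
      = {w : Fin (3 * q) → ZMod 2 |
          (∀ i : Fin q,
            w ⟨3 * (i : ℕ), by have := i.isLt; omega⟩ *
              w ⟨3 * (i : ℕ) + 1, by have := i.isLt; omega⟩ +
              w ⟨3 * (i : ℕ) + 2, by have := i.isLt; omega⟩ = 0) ∧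
          ∀ k, (∑ j, A k j * w j) + δ k = 0} := by
  have hδ : ∀ x y : ZMod 2, x + y = 0 ↔ x = y := by decide
  have hτ (v : Fin (10 * q) → ZMod 2) (i : Fin q) :
      Matrix.vecMul v (Mtau q) ⟨3 * (i : ℕ), by have := i.isLt; omega⟩ = block q v i 0 ∧
      Matrix.vecMul v (Mtau q) ⟨3 * (i : ℕ) + 1, by have := i.isLt; omega⟩ = block q v i 1 ∧
      Matrix.vecMul v (Mtau q) ⟨3 * (i : ℕ) + 2, by have := i.isLt; omega⟩ = block q v i 2 :=
    ⟨vecMul_Mtau_block q v i 0, vecMul_Mtau_block q v i 1,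
      vecMul_Mtau_block q v i 2⟩
  ext w
  simp only [Set.mem_image, Set.mem_ofPred_eq, hδ]
  constructor
  · rintro ⟨v, ⟨hv, hwt, hlin⟩, rfl⟩
    refine ⟨fun i => ?_, hlin⟩
    obtain ⟨h0, h1, h2⟩ := hτ v i
    rw [← hδ, h0, h1, h2]
    exact (hammingWt_le_iff q v hv).1 hwt i
  · rintro ⟨hquad, hlin⟩
    have hmem : ∀ i, block q (lift q w) i ∈ SigmaHat := fun i => by
      rw [block_lift]
      exact cosetWord_mem _ _ _
    refine ⟨lift q w, ⟨hmem, (hammingWt_le_iff q _ hmem).2 fun i => ?_, ?_⟩, vecMul_lift q w⟩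
    · rw [block_lift, cosetWord_zero, cosetWord_one, cosetWord_two, hδ]
      exact hquad i
    · simpa only [vecMul_lift] using hlin
end
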